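/- Let P ⊆ ℝ^d be a d-dimensional reflexive polytope and let v, w be lattice points on the boundary ∂P of P. Then the following are equivalent: (i) v + w ≠ 0 and v and w do not lie on a common facet of P; (ii) v + w is a lattice point on ∂P. -/

import Mathlib

noncomputable section

/-- The standard inner product on `ℝ^d`. -/
def dotp {d : ℕ} (x y : Fin d → ℝ) : ℝ := ∑ i, x i * y i

/-- `x` is a point of the lattice `ℤ^d`. -/
def IsLP {d : ℕ} (x : Fin d → ℝ) : Prop := ∀ i, ∃ n : ℤ, x i = (n : ℝ)

/-- A lattice polytope: convex hull of finitely many lattice points. -/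
def IsLatticePolytope {d : ℕ} (P : Set (Fin d → ℝ)) : Prop :=
  ∃ V : Finset (Fin d → ℝ), (∀ v ∈ V, IsLP v) ∧ P = convexHull ℝ (V : Set (Fin d → ℝ))

/-- The dual polytope `P* = {x | ⟨x,y⟩ ≤ 1 ∀ y ∈ P}`. -/
def dualPolytope {d : ℕ} (P : Set (Fin d → ℝ)) : Set (Fin d → ℝ) :=
  {x | ∀ y ∈ P, dotp x y ≤ 1}

/-- `P` is a reflexive polytope: a (`d`-dimensional) lattice polytope with `0` in its
interior whose dual is again a lattice polytope. -/
def IsReflexive {d : ℕ} (P : Set (Fin d → ℝ)) : Prop :=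
  IsLatticePolytope P ∧ (0 : Fin d → ℝ) ∈ interior P ∧ IsLatticePolytope (dualPolytope P)

/-- `F` is a facet of `P` with (uniquely determined) outer normal `u`, normalized by
`⟨u, F⟩ = 1` (possible since `0` is in the interior of `P`). -/
def IsFacetNormal {d : ℕ} (P F : Set (Fin d → ℝ)) (u : Fin d → ℝ) : Prop :=
  F.Nonempty ∧ (∀ y ∈ P, dotp u y ≤ 1) ∧ F = {y ∈ P | dotp u y = 1} ∧
    Module.finrank ℝ (vectorSpan ℝ F) = d - 1

/-- `F` is a facet of `P`. -/
def IsFacet {d : ℕ} (P F : Set (Fin d → ℝ)) : Prop := ∃ u, IsFacetNormal P F u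

/-- `P` is simplicial: every facet has exactly `d` vertices. -/
def IsSimplicial {d : ℕ} (P : Set (Fin d → ℝ)) : Prop :=
  ∀ F, IsFacet P F → (Set.extremePoints ℝ F).ncard = d


lemma dotp_eq {d : ℕ} (x y : Fin d → ℝ) : dotp x y = x ⬝ᵥ y := rfl

/-- `dotp u` as a continuous linear functional. -/
def dotL {d : ℕ} (u : Fin d → ℝ) : (Fin d → ℝ) →L[ℝ] ℝ :=
  LinearMap.toContinuousLinearMap (dotProductBilin ℝ ℝ u)

lemma dotL_apply {d : ℕ} (u y : Fin d → ℝ) : dotL u y = dotp u y := rfl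

lemma dotp_comm' {d : ℕ} (x y : Fin d → ℝ) : dotp x y = dotp y x := dotProduct_comm x y

lemma exists_dotp {d : ℕ} (f : (Fin d → ℝ) →ₗ[ℝ] ℝ) : ∃ a, ∀ y, f y = dotp a y := by
  refine ⟨fun i => f (Pi.single i 1), fun y => ?_⟩
  rw [LinearMap.pi_apply_eq_sum_univ f y]
  unfold dotp
  refine Finset.sum_congr rfl fun i _ => ?_
  rw [smul_eq_mul, mul_comm]
  congr 2
  ext j
  simp [Pi.single_apply, eq_comm]

lemma dotp_int {d : ℕ} {x y : Fin d → ℝ} (hx : IsLP x) (hy : IsLP y) :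
    ∃ n : ℤ, dotp x y = n := by
  choose a ha using hx
  choose b hb using hy
  refine ⟨∑ i, a i * b i, ?_⟩
  unfold dotp
  push_cast
  exact Finset.sum_congr rfl fun i _ => by rw [ha, hb]

lemma dotp_add' {d : ℕ} (u x y : Fin d → ℝ) : dotp u (x + y) = dotp u x + dotp u y :=
  dotProduct_add u x y

lemma dotp_smul' {d : ℕ} (u y : Fin d → ℝ) (c : ℝ) : dotp u (c • y) = c * dotp u y :=
  dotProduct_smul c u y

lemma smul_dotp' {d : ℕ} (u y : Fin d → ℝ) (c : ℝ) : dotp (c • u) y = c * dotp u y :=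
  smul_dotProduct c u y

lemma add_dotp' {d : ℕ} (u x y : Fin d → ℝ) : dotp (u + x) y = dotp u y + dotp x y :=
  add_dotProduct u x y

lemma IsLatticePolytope.compact {d : ℕ} {P : Set (Fin d → ℝ)} (h : IsLatticePolytope P) :
    IsCompact P := by
  obtain ⟨V, -, rfl⟩ := h
  exact V.finite_toSet.isCompact_convexHull (𝕜 := ℝ)

lemma IsLatticePolytope.convex {d : ℕ} {P : Set (Fin d → ℝ)} (h : IsLatticePolytope P) :
    Convex ℝ P := by
  obtain ⟨V, -, rfl⟩ := h
  exact convex_convexHull ℝ _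

lemma dotp_le_of_extreme {d : ℕ} {Q : Set (Fin d → ℝ)} (h : IsLatticePolytope Q)
    (x : Fin d → ℝ) (c : ℝ) (hx : ∀ u ∈ Q.extremePoints ℝ, dotp u x ≤ c) :
    ∀ u ∈ Q, dotp u x ≤ c := by
  have hk := closure_convexHull_extremePoints h.compact h.convex
  have hsub : closure (convexHull ℝ (Q.extremePoints ℝ)) ⊆ {u | dotL x u ≤ c} := by
    apply closure_minimal
    · apply convexHull_min
      · intro u hu
        have := hx u hu
        rw [dotp_comm'] at this
        exact this
      · exact convex_halfSpace_le (dotL x).toLinearMap.isLinear c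
    · exact isClosed_le (dotL x).continuous continuous_const
  intro u hu
  rw [← hk] at hu
  rw [dotp_comm']
  exact hsub hu

lemma extreme_isLP {d : ℕ} {Q : Set (Fin d → ℝ)} (h : IsLatticePolytope Q)
    {u : Fin d → ℝ} (hu : u ∈ Q.extremePoints ℝ) : IsLP u := by
  obtain ⟨V, hV, rfl⟩ := h
  exact hV u (extremePoints_convexHull_subset hu)

lemma mem_of_dual {d : ℕ} {P : Set (Fin d → ℝ)} (h : IsLatticePolytope P)
    (h0 : (0 : Fin d → ℝ) ∈ P) (x : Fin d → ℝ)
    (hx : ∀ u ∈ dualPolytope P, dotp u x ≤ 1) : x ∈ P := by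
  by_contra hxP
  obtain ⟨f, s, hf, hs⟩ := geometric_hahn_banach_closed_point h.convex h.compact.isClosed hxP
  obtain ⟨a, ha⟩ := exists_dotp f.toLinearMap
  have ha' : ∀ y, f y = dotp a y := ha
  have hs0 : 0 < s := by simpa using hf 0 h0
  have := hx (s⁻¹ • a) (fun y hy => by
    rw [smul_dotp', ← ha', inv_mul_le_iff₀ hs0]
    linarith [hf y hy])
  rw [smul_dotp', ← ha', inv_mul_le_iff₀ hs0] at this
  linarith

lemma span_facet {d : ℕ} {P : Set (Fin d → ℝ)} (h : IsLatticePolytope P)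
    {u : Fin d → ℝ} (hu : u ∈ (dualPolytope P).extremePoints ℝ) :
    Submodule.span ℝ {y ∈ P | dotp u y = 1} = ⊤ := by
  by_contra hne
  obtain ⟨f, hf0, hf⟩ := Submodule.exists_le_ker_of_lt_top _ (lt_top_iff_ne_top.2 hne)
  obtain ⟨z, hz⟩ := exists_dotp f
  have hz0 : z ≠ 0 := by
    rintro rfl
    apply hf0
    ext y
    simp [hz, dotp]
  obtain ⟨V, -, rfl⟩ := h
  have hVP : (V : Set (Fin d → ℝ)) ⊆ convexHull ℝ (V : Set (Fin d → ℝ)) := subset_convexHull ℝ _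
  -- small perturbations
  have key : ∀ᶠ ε : ℝ in nhds 0, ∀ p ∈ V, dotp u p + ε * dotp z p ≤ 1 := by
    rw [Filter.eventually_all_finset]
    intro p hp
    by_cases h1 : dotp u p = 1
    · have : dotp z p = 0 := by
        rw [← hz]
        exact hf (Submodule.subset_span ⟨hVP hp, h1⟩)
      simp [h1, this]
    · have hlt : dotp u p < 1 := lt_of_le_of_ne (hu.1 p (hVP hp)) h1
      have hc : Filter.Tendsto (fun ε : ℝ => dotp u p + ε * dotp z p) (nhds 0)
          (nhds (dotp u p + 0 * dotp z p)) := by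
        apply Continuous.tendsto; fun_prop
      have := hc.eventually_lt_const (u := 1) (by simpa using hlt)
      exact this.mono fun _ h => h.le
  obtain ⟨δ, hδ, hk⟩ := Metric.eventually_nhds_iff.1 key
  have mem : ∀ ε : ℝ, |ε| < δ → u + ε • z ∈ dualPolytope (convexHull ℝ (V : Set (Fin d → ℝ))) := by
    intro ε hε
    have h1 := hk (y := ε) (by simpa using hε)
    have : convexHull ℝ (V : Set (Fin d → ℝ)) ⊆ {y | dotL (u + ε • z) y ≤ 1} := by
      apply convexHull_min
      · intro p hp
        show dotp _ _ ≤ 1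
        rw [add_dotp', smul_dotp']
        exact h1 p hp
      · exact convex_halfSpace_le (dotL _).toLinearMap.isLinear 1
    exact fun y hy => this hy
  have e1 := mem (δ / 2) (by rw [abs_of_pos] <;> linarith)
  have e2 := mem (-(δ / 2)) (by rw [abs_neg, abs_of_pos] <;> linarith)
  have := hu.2 e1 e2 ⟨1/2, 1/2, by norm_num, by norm_num, by norm_num, by
    ext i; simp; ring⟩
  have h3 : (δ / 2) • z = 0 := by simpa using this
  rcases smul_eq_zero.1 h3 with h4 | h4
  · linarith
  · exact hz0 h4

lemma facet_of_extreme {d : ℕ} {P : Set (Fin d → ℝ)} (h : IsLatticePolytope P)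
    {u : Fin d → ℝ} (hu : u ∈ (dualPolytope P).extremePoints ℝ) {v : Fin d → ℝ}
    (hv : v ∈ P) (huv : dotp u v = 1) : IsFacet P {y ∈ P | dotp u y = 1} := by
  refine ⟨u, ⟨v, hv, huv⟩, hu.1, rfl, ?_⟩
  have hs := span_facet h hu
  set F : Set (Fin d → ℝ) := {y ∈ P | dotp u y = 1} with hF
  have hvF : v ∈ F := ⟨hv, huv⟩
  have hle : vectorSpan ℝ F ≤ LinearMap.ker (dotL u).toLinearMap := by
    rw [vectorSpan_eq_span_vsub_set_right ℝ hvF, Submodule.span_le]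
    rintro _ ⟨y, hy, rfl⟩
    show dotL u (y - v) = 0
    rw [map_sub, dotL_apply, dotL_apply, hy.2, huv, sub_self]
  have hlt : vectorSpan ℝ F < ⊤ := by
    rw [lt_top_iff_ne_top]
    intro ht
    have : v ∈ vectorSpan ℝ F := by rw [ht]; trivial
    have h2 : dotp u v = 0 := hle this
    linarith
  have h1 := Submodule.finrank_lt hlt.ne
  have htop : (⊤ : Submodule ℝ (Fin d → ℝ)) ≤ vectorSpan ℝ F ⊔ Submodule.span ℝ {v} := by
    rw [← hs, Submodule.span_le]
    intro y hy
    have : y = (y - v) + v := by simp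
    rw [this]
    exact Submodule.add_mem_sup (vsub_mem_vectorSpan ℝ hy hvF)
      (Submodule.mem_span_singleton_self v)
  have h2 := Submodule.finrank_mono htop
  have h3 := Submodule.finrank_add_le_finrank_add_finrank (vectorSpan ℝ F) (Submodule.span ℝ {v})
  have hv0 : v ≠ 0 := by
    rintro rfl
    simp [dotp] at huv
  have h4 := finrank_span_singleton (K := ℝ) hv0
  rw [finrank_top] at h2
  simp only [Module.finrank_fin_fun] at h1 h2
  omega

lemma interior_lattice {d : ℕ} {P : Set (Fin d → ℝ)} (hP : IsReflexive P)
    {x : Fin d → ℝ} (hx : x ∈ interior P) (hxL : IsLP x) : x = 0 := by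
  obtain ⟨hL, h0, hD⟩ := hP
  by_contra hx0
  obtain ⟨ε, hε, hmem⟩ : ∃ ε : ℝ, 0 < ε ∧ (1 + ε) • x ∈ P := by
    have hc : Filter.Tendsto (fun ε : ℝ => (1 + ε) • x) (nhds 0) (nhds ((1 + (0:ℝ)) • x)) := by
      apply Continuous.tendsto; fun_prop
    have he : ∀ᶠ ε : ℝ in nhds 0, (1 + ε) • x ∈ P :=
      hc.eventually_mem (by simpa using mem_interior_iff_mem_nhds.1 hx)
    obtain ⟨δ, hδ, hk⟩ := Metric.eventually_nhds_iff.1 he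
    refine ⟨δ / 2, by linarith, hk ?_⟩
    rw [Real.dist_eq, sub_zero, abs_of_pos] <;> linarith
  have hle : ∀ u ∈ dualPolytope P, dotp u x ≤ 0 := by
    apply dotp_le_of_extreme hD
    intro u hu
    obtain ⟨n, hn⟩ := dotp_int (extreme_isLP hD hu) hxL
    have h1 := hu.1 _ hmem
    rw [dotp_smul'] at h1
    by_contra hpos
    push Not at hpos
    rw [hn] at h1 hpos
    have : (1 : ℤ) ≤ n := by exact_mod_cast hpos
    have : (1 : ℝ) ≤ n := by exact_mod_cast this
    nlinarith
  obtain ⟨M, hM⟩ := (hL.compact.image (dotL x).continuous).bddAbove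
  have hM' : ∀ y ∈ P, dotp x y ≤ M := fun y hy => hM ⟨y, hy, rfl⟩
  have hpos : 0 < dotp x x := by
    have h1 : 0 ≤ dotp x x := Finset.sum_nonneg fun i _ => mul_self_nonneg _
    have h2 : dotp x x ≠ 0 := fun h => hx0 (dotProduct_self_eq_zero.1 h)
    exact lt_of_le_of_ne h1 h2.symm
  have hMpos : 0 < M := lt_of_lt_of_le hpos (hM' x (interior_subset hx))
  have := hle (M⁻¹ • x) (fun y hy => by
    rw [smul_dotp', inv_mul_le_iff₀ hMpos]
    linarith [hM' y hy])
  rw [smul_dotp'] at this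
  have : 0 < M⁻¹ * dotp x x := by positivity
  linarith

/-- for lattice points `v, w` on the boundary of a reflexive polytope `P`:
`v + w ≠ 0` and `v, w` lie on no common facet iff `v + w` is a lattice point on the boundary. -/
theorem stmt5 {d : ℕ} (P : Set (Fin d → ℝ)) (hP : IsReflexive P)
    (v w : Fin d → ℝ) (hv : v ∈ frontier P) (hw : w ∈ frontier P)
    (hvL : IsLP v) (hwL : IsLP w) :
    (v + w ≠ 0 ∧ ¬ ∃ F, IsFacet P F ∧ v ∈ F ∧ w ∈ F) ↔
      (v + w ∈ frontier P ∧ IsLP (v + w)) := by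
  have hcl : IsClosed P := hP.1.compact.isClosed
  have hvP : v ∈ P := hcl.frontier_subset hv
  have hwP : w ∈ P := hcl.frontier_subset hw
  have hL : IsLP (v + w) := fun i => by
    obtain ⟨a, ha⟩ := hvL i
    obtain ⟨b, hb⟩ := hwL i
    exact ⟨a + b, by simp [ha, hb]⟩
  constructor
  · rintro ⟨hne, hnf⟩
    refine ⟨?_, hL⟩
    rw [hcl.frontier_eq]
    refine ⟨?_, fun hi => hne (interior_lattice hP hi hL)⟩
    apply mem_of_dual hP.1 (interior_subset hP.2.1)
    apply dotp_le_of_extreme hP.2.2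
    intro u hu
    have huL := extreme_isLP hP.2.2 hu
    obtain ⟨a, ha⟩ := dotp_int huL hvL
    obtain ⟨b, hb⟩ := dotp_int huL hwL
    have h1 := hu.1 v hvP
    have h2 := hu.1 w hwP
    rw [dotp_add']
    by_contra hgt
    push Not at hgt
    rw [ha] at h1 hgt
    rw [hb] at h2 hgt
    have h1' : a ≤ 1 := by exact_mod_cast h1
    have h2' : b ≤ 1 := by exact_mod_cast h2
    have h3' : 1 < a + b := by exact_mod_cast hgt
    have ha1 : a = 1 := by omega
    have hb1 : b = 1 := by omega
    have hv1 : dotp u v = 1 := by rw [ha, ha1]; simp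
    have hw1 : dotp u w = 1 := by rw [hb, hb1]; simp
    exact hnf ⟨_, facet_of_extreme hP.1 hu hvP hv1, ⟨hvP, hv1⟩, ⟨hwP, hw1⟩⟩
  · rintro ⟨hf, -⟩
    refine ⟨fun h => ?_, ?_⟩
    · rw [h] at hf
      exact hf.2 hP.2.1
    · rintro ⟨F, ⟨u, -, hu, rfl, -⟩, h1, h2⟩
      have := hu _ (hcl.frontier_subset hf)
      rw [dotp_add', h1.2, h2.2] at this
      norm_num at this
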